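/- arXiv:2210.15541 — 3 statements merged into one kernel-verified Lean document; each statement's English description precedes it below -/
import Mathlib

section
/- Fix naturals n, k with k ≥ 1, k dividing n, and n ≥ k². Then the union attention graph G* contains a Hamiltonian path: there exists a bijection γ : {0,…,n−1} → V such that for every 0 ≤ i ≤ n−2, the ordered pair (γ(i), γ(i+1)) is an edge of G*. -/
/-!
Write `n = k * m`; then `k ≤ m`, so all `k` relays lie in the last block. A Hamiltonian path is
`relay 0, block 0, relay 1, block 1, …, relay (k-1), block (k-1) minus the relays`.
Consecutive vertices either lie in the same block or one of them is a relay.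
Position `i = q * (m + 1) + r` with `r ≤ m` holds relay `q` when `r = 0` and the vertex `r - 1` of
block `q` otherwise. This single formula also covers the shortened last block: for `q = k - 1`,
the bound `i < k * m` forces `r ≤ m - k`, so the path stops just before the relays. The map is
injective by `starPath_inj`, hence a bijection of `Fin n`.
-/

/-- The union attention graph `G*` on `{0,…,n-1}`: `(u,v)` is an edge iff
`u` and `v` lie in the same block (`b v = ⌊v·k/n⌋`), or `u` is a relay vertex
(`u ≥ n - k`), or `v` is a relay vertex. -/
def starEdge (n k : ℕ) (u v : Fin n) : Prop :=
  u.val * k / n = v.val * k / n ∨ n - k ≤ u.val ∨ n - k ≤ v.val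

/-- The vertex at position `i` of the path, for `k` blocks of size `m`. -/
def starPath (k m i : ℕ) : ℕ :=
  if i % (m + 1) = 0 then k * m - k + i / (m + 1) else m * (i / (m + 1)) + (i % (m + 1) - 1)

lemma starPath_div_lt {k m i : ℕ} (hi : i < k * m) : i / (m + 1) < k := by
  rw [Nat.div_lt_iff_lt_mul (by omega)]
  nlinarith

lemma starPath_of_eq {k m i : ℕ} (h : i % (m + 1) = 0) :
    starPath k m i = k * m - k + i / (m + 1) := if_pos h

lemma starPath_of_ne {k m i : ℕ} (h : i % (m + 1) ≠ 0) :
    starPath k m i = m * (i / (m + 1)) + (i % (m + 1) - 1) := if_neg h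

lemma starPath_lt_relay {k m i : ℕ} (hkm : k ≤ m) (hi : i < k * m) (h : i % (m + 1) ≠ 0) :
    starPath k m i < k * m - k := by
  rw [starPath_of_ne h]
  have hq := starPath_div_lt hi
  have hr := Nat.mod_lt i (show m + 1 > 0 by omega)
  have hd := Nat.div_add_mod i (m + 1)
  generalize i / (m + 1) = q at *
  generalize i % (m + 1) = r at *
  obtain ⟨d, rfl⟩ : ∃ d, k = q + 1 + d := ⟨k - (q + 1), by omega⟩
  apply Nat.lt_sub_of_add_lt
  rcases Nat.eq_zero_or_pos d with rfl | hd0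
  · -- last block: `i < k * m` forces `r ≤ m - k`
    ring_nf at *
    omega
  · -- at least one whole block, of size `m ≥ k`, lies beyond block `q`
    have : m ≤ d * m := Nat.le_mul_of_pos_left m hd0
    ring_nf at *
    omega

lemma starPath_div_block {k m i : ℕ} (hm : 0 < m) (h : i % (m + 1) ≠ 0) :
    starPath k m i / m = i / (m + 1) := by
  have hr := Nat.mod_lt i (show m + 1 > 0 by omega)
  rw [starPath_of_ne h, Nat.mul_add_div hm,
    Nat.div_eq_of_lt (a := i % (m + 1) - 1) (by omega), Nat.add_zero]

lemma starPath_lt {k m i : ℕ} (hkm : k ≤ m) (hi : i < k * m) : starPath k m i < k * m := by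
  by_cases h : i % (m + 1) = 0
  · have hq := starPath_div_lt hi
    have : k ≤ k * m := Nat.le_mul_of_pos_right k (hq.pos.trans_le hkm)
    rw [starPath_of_eq h]
    generalize i / (m + 1) = q at *
    omega
  · have := starPath_lt_relay hkm hi h
    omega

lemma starPath_inj {k m i j : ℕ} (hkm : k ≤ m) (hi : i < k * m) (hj : j < k * m)
    (hij : starPath k m i = starPath k m j) : i = j := by
  have hm : 0 < m := Nat.pos_of_mul_pos_left (by omega : 0 < k * m)
  have di := Nat.div_add_mod i (m + 1)
  have dj := Nat.div_add_mod j (m + 1)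
  by_cases h : i % (m + 1) = 0 <;> by_cases h' : j % (m + 1) = 0
  · rw [starPath_of_eq h, starPath_of_eq h'] at hij
    rw [← di, ← dj, h, h', Nat.add_left_cancel hij]
  · have := starPath_lt_relay hkm hj h'
    rw [starPath_of_eq h] at hij
    exact absurd (hij ▸ this) (by simp)
  · have := starPath_lt_relay hkm hi h
    rw [starPath_of_eq h'] at hij
    exact absurd (hij ▸ this) (by simp)
  · have hq : i / (m + 1) = j / (m + 1) := by
      rw [← starPath_div_block (k := k) hm h, ← starPath_div_block (k := k) hm h', hij]
    rw [starPath_of_ne h, starPath_of_ne h', hq] at hij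
    have hr : i % (m + 1) = j % (m + 1) := by omega
    rw [← di, ← dj, hq, hr]

/-- For `k ≥ 1`, `k ∣ n`, `n ≥ k²`, the union attention graph `G*` contains a
Hamiltonian path: a bijection `γ : {0,…,n-1} → V` with `(γ i, γ (i+1))` an edge
for all `0 ≤ i ≤ n-2`. -/
theorem starGraph_hamiltonian_path (n k : ℕ) (hk : 1 ≤ k) (hkn : k ∣ n)
    (hnk : k ^ 2 ≤ n) :
    ∃ γ : Fin n ≃ Fin n, ∀ (i : ℕ) (h : i + 1 < n),
      starEdge n k (γ ⟨i, by omega⟩) (γ ⟨i + 1, h⟩) := by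
  obtain ⟨m, rfl⟩ := hkn
  have hkm : k ≤ m := by
    rw [pow_two] at hnk
    exact Nat.le_of_mul_le_mul_left hnk hk
  let f : Fin (k * m) → Fin (k * m) := fun i => ⟨starPath k m i, starPath_lt hkm i.2⟩
  have hf : Function.Injective f := fun i j hij =>
    Fin.ext (starPath_inj hkm i.2 j.2 (congrArg Fin.val hij))
  refine ⟨Equiv.ofBijective f (Finite.injective_iff_bijective.mp hf), fun i h => ?_⟩
  change starPath k m i * k / (k * m) = starPath k m (i + 1) * k / (k * m) ∨
    k * m - k ≤ starPath k m i ∨ k * m - k ≤ starPath k m (i + 1)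
  by_cases h0 : i % (m + 1) = 0
  · right; left
    rw [starPath_of_eq h0]
    exact Nat.le_add_right _ _
  by_cases h1 : (i + 1) % (m + 1) = 0
  · right; right
    rw [starPath_of_eq h1]
    exact Nat.le_add_right _ _
  · left
    rw [mul_comm _ k, mul_comm _ k, Nat.mul_div_mul_left _ _ hk, Nat.mul_div_mul_left _ _ hk,
      starPath_div_block (by omega) h0, starPath_div_block (by omega) h1, Nat.succ_div,
      if_neg (fun hd => h1 (Nat.mod_eq_zero_of_dvd hd))]
    rfl
end

section
/- Fix naturals n, k with k ≥ 1, k dividing n, and n ≥ k². Then the union attention graph G* simultaneously satisfies: (1) every vertex has a self-loop, i.e., (v,v) is an edge for all v ∈ V; (2) G* contains a Hamiltonian path, i.e., a bijection γ : {0,…,n−1} → V with (γ(i), γ(i+1)) an edge for all 0 ≤ i ≤ n−2; and (3) for every ordered pair of vertices (u,v) there is a directed path from u to v of length at most 2. -/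
/-- The `i`-th vertex of the Hamiltonian path, for `k` blocks of size `m`. -/
def hamPos (k m i : ℕ) : ℕ :=
  if i % (m + 1) = m ∨ i + 1 = k * m then k * m - k + i / (m + 1)
  else i / (m + 1) * m + i % (m + 1)

/-- The linear facts about the quotient `q` and remainder `r` of a step `i < k * m`: either
the block `q` is not the last one, and then `i` is not the last step, or `q = k - 1`. The
products `q * m` and `k * m` are left as atoms for `omega`. -/
lemma quot_rem_bounds {k m i : ℕ} (hkm : k ≤ m) (hi : i < k * m) :
    i = i / (m + 1) * m + i / (m + 1) + i % (m + 1) ∧ i % (m + 1) ≤ m ∧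
    ((i / (m + 1) + 1 < k ∧ i / (m + 1) * m + m + m ≤ k * m ∧ i + 1 ≠ k * m) ∨
      (i / (m + 1) + 1 = k ∧ i / (m + 1) * m + m = k * m)) := by
  have h1 := Nat.div_add_mod i (m + 1)
  have h2 : i % (m + 1) < m + 1 := Nat.mod_lt i (Nat.succ_pos m)
  generalize i / (m + 1) = q at *
  generalize i % (m + 1) = r at *
  have h3 : i = q * m + q + r := by rw [← h1]; ring
  have hq : q < k := by
    by_contra h
    have := Nat.mul_le_mul_right m (not_lt.mp h)
    omega
  refine ⟨h3, by omega, ?_⟩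
  rcases Nat.lt_or_ge (q + 1) k with h | h
  · have h4 := Nat.mul_le_mul_right m (show q + 2 ≤ k from h)
    have h5 : (q + 2) * m = q * m + m + m := by ring
    exact Or.inl ⟨h, by omega, by omega⟩
  · obtain rfl : k = q + 1 := by omega
    exact Or.inr ⟨rfl, by ring⟩

lemma hamPos_lt {k m i : ℕ} (hkm : k ≤ m) (hi : i < k * m) : hamPos k m i < k * m := by
  obtain ⟨h1, h2, h3⟩ := quot_rem_bounds hkm hi
  unfold hamPos
  split_ifs <;> omega

lemma hamPos_inj {k m i j : ℕ} (hkm : k ≤ m) (hi : i < k * m) (hj : j < k * m)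
    (h : hamPos k m i = hamPos k m j) : i = j := by
  obtain ⟨h1, h2, h3⟩ := quot_rem_bounds hkm hi
  obtain ⟨g1, g2, g3⟩ := quot_rem_bounds hkm hj
  unfold hamPos at h
  generalize i / (m + 1) = q at *
  generalize i % (m + 1) = r at *
  generalize j / (m + 1) = q' at *
  generalize j % (m + 1) = r' at *
  split_ifs at h with a b b
  · obtain rfl : q = q' := by omega
    omega
  · omega
  · omega
  · have hr : r < m := by omega
    have hr' : r' < m := by omega
    have e : q = q' := by
      have := congrArg (· / m) h
      simpa [Nat.mul_comm _ m, Nat.mul_add_div (show 0 < m by omega),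
        Nat.div_eq_of_lt hr, Nat.div_eq_of_lt hr'] using this
    subst e
    omega

/-- The vertex `q * m + r` with `r < m` lies in block `q`. -/
lemma block_eq {k m q r : ℕ} (hk : 0 < k) (hr : r < m) : (q * m + r) * k / (k * m) = q := by
  rw [Nat.mul_comm _ k, Nat.mul_div_mul_left _ _ hk, Nat.mul_comm q m,
    Nat.mul_add_div (by omega), Nat.div_eq_of_lt hr, Nat.add_zero]

/-- Consecutive vertices of the path satisfy the edge condition of `starEdge`. -/
lemma hamPos_step {k m i : ℕ} (hk : 0 < k) :
    hamPos k m i * k / (k * m) = hamPos k m (i + 1) * k / (k * m) ∨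
      k * m - k ≤ hamPos k m i ∨ k * m - k ≤ hamPos k m (i + 1) := by
  by_cases a : i % (m + 1) = m ∨ i + 1 = k * m
  · right; left; simp only [hamPos, if_pos a]; exact Nat.le_add_right _ _
  by_cases b : (i + 1) % (m + 1) = m ∨ i + 1 + 1 = k * m
  · right; right; simp only [hamPos, if_pos b]; exact Nat.le_add_right _ _
  left
  have h2 : i % (m + 1) < m + 1 := Nat.mod_lt i (Nat.succ_pos m)
  have h2' : (i + 1) % (m + 1) < m + 1 := Nat.mod_lt (i + 1) (Nat.succ_pos m)
  -- `i` is not the end of a period of length `m + 1`, so the quotient does not change.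
  have hq : (i + 1) / (m + 1) = i / (m + 1) := by
    rw [Nat.succ_div, if_neg, Nat.add_zero]
    intro hd
    obtain ⟨c, hc⟩ := hd
    apply a
    left
    have hi' : i = m + (m + 1) * (c - 1) := by
      rcases c with _ | c
      · omega
      · rw [Nat.mul_succ] at hc
        simp only [Nat.add_sub_cancel]
        omega
    rw [hi', Nat.add_mul_mod_self_left, Nat.mod_eq_of_lt (Nat.lt_succ_self m)]
  simp only [hamPos, if_neg a, if_neg b]
  rw [block_eq hk (by omega), block_eq hk (by omega), hq]

/-- For `k ≥ 1`, `k ∣ n`, `n ≥ k²`, the union attention graph `G*` satisfies the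
three conditions of Assumption 1: (1) every vertex has a self-loop; (2) `G*`
contains a Hamiltonian path; (3) every ordered pair of vertices is joined by a
directed path of length at most 2. -/
theorem starGraph_assumption_one (n k : ℕ) (hk : 1 ≤ k) (hkn : k ∣ n)
    (hnk : k ^ 2 ≤ n) :
    (∀ v : Fin n, starEdge n k v v) ∧
      (∃ γ : Fin n ≃ Fin n, ∀ (i : ℕ) (h : i + 1 < n),
        starEdge n k (γ ⟨i, by omega⟩) (γ ⟨i + 1, h⟩)) ∧
      (∀ u v : Fin n, ∃ w : Fin n, starEdge n k u w ∧ starEdge n k w v) := by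
  obtain ⟨m, rfl⟩ := hkn
  have hkm : k ≤ m := by
    rw [pow_two] at hnk
    exact Nat.le_of_mul_le_mul_left hnk hk
  refine ⟨fun v => Or.inl rfl, ?_, ?_⟩
  · let f : Fin (k * m) → Fin (k * m) := fun i => ⟨hamPos k m i, hamPos_lt hkm i.2⟩
    have hf : Function.Injective f := fun i j h =>
      Fin.ext (hamPos_inj hkm i.2 j.2 (congrArg Fin.val h))
    exact ⟨Equiv.ofBijective f (Finite.injective_iff_bijective.mp hf),
      fun _ _ => hamPos_step hk⟩
  · intro u v
    -- The relay `n - 1` is an intermediate vertex for every pair.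
    have hr : k * m - k ≤ k * m - 1 := by omega
    exact ⟨⟨k * m - 1, by have := u.2; omega⟩, Or.inr (Or.inr hr), Or.inr (Or.inl hr)⟩
end

section
/- Let (I,J) be a pair of random indices in {1,…,n}² drawn by the fastRG edge-sampling procedure. Then for all i, j, the joint law satisfies P(I = i, J = j) = (Y·B·Z^T)_{i,j} / λ; in particular, the marginal distribution of a single sampled edge is proportional to the SBM edge-probability matrix Y·B·Z^T. -/
/-!
The random indices are not assumed measurable, so `μ {I = i, J = j}` cannot be computed by
additivity over the cluster pairs `(u, v)`. Countable subadditivity, valid for arbitrary sets, still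
gives `μ {I = i, J = j} ≤ ∑ u v, Y i u * B u v * Z j v / λ = (Y B Zᵀ) i j / λ`. These upper bounds
sum to `1` over all `(i, j)`, while the sets `{I = i, J = j}` cover a space of mass `1`; hence
every one of the inequalities is an equality.
-/

open Matrix MeasureTheory

/-- The entries of `Y B Zᵀ` sum to the normalising constant `λ` of the cluster-pair law. -/
lemma sum_entries_eq {n k : ℕ} (Y Z : Matrix (Fin n) (Fin k) ℝ) (B : Matrix (Fin k) (Fin k) ℝ) :
    ∑ p : Fin n × Fin n, (Y * B * Zᵀ) p.1 p.2 =
      ∑ u, ∑ v, (∑ i, Y i u) * B u v * ∑ j, Z j v := by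
  have h : ∀ p : Fin n × Fin n, (Y * B * Zᵀ) p.1 p.2 =
      ∑ q : Fin k × Fin k, Y p.1 q.1 * B q.1 q.2 * Z p.2 q.2 := by
    intro p
    rw [Fintype.sum_prod_type_right]
    simp [Matrix.mul_apply, Finset.sum_mul]
  simp_rw [h]
  rw [Finset.sum_comm, Fintype.sum_prod_type]
  refine Finset.sum_congr rfl fun u _ => Finset.sum_congr rfl fun v _ => ?_
  rw [Fintype.sum_prod_type, Finset.sum_mul, Finset.sum_mul_sum]

/-- The joint law of a single edge `(I,J)` sampled by the fastRG procedure: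
first a cluster pair `(U,V)` is drawn with probability `cY U * B U V * cZ V / λ`,
then, conditionally independently given `(U,V) = (u,v)`, a source `I` with
`P(I = i | U = u) = Y i u / cY u` and a destination `J` with
`P(J = j | V = v) = Z j v / cZ v`. Then `P(I = i, J = j) = (Y B Zᵀ)_{i,j} / λ`. -/
theorem fastRG_single_edge_law
    {Ω : Type*} [MeasurableSpace Ω] (μ : Measure Ω) [IsProbabilityMeasure μ]
    (n k : ℕ) (Y Z : Matrix (Fin n) (Fin k) ℝ) (B : Matrix (Fin k) (Fin k) ℝ)
    (hY : ∀ i u, 0 ≤ Y i u) (hZ : ∀ j v, 0 ≤ Z j v) (hB : ∀ u v, 0 ≤ B u v)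
    (cY cZ : Fin k → ℝ)
    (hcY : ∀ u, cY u = ∑ i, Y i u) (hcZ : ∀ v, cZ v = ∑ j, Z j v)
    (hcYpos : ∀ u, 0 < cY u) (hcZpos : ∀ v, 0 < cZ v)
    (lam : ℝ) (hlam : lam = ∑ u, ∑ v, cY u * B u v * cZ v) (hlampos : 0 < lam)
    (U V : Ω → Fin k) (I J : Ω → Fin n)
    (hUV : ∀ u v, μ {ω | U ω = u ∧ V ω = v} =
      ENNReal.ofReal (cY u * B u v * cZ v / lam))
    (hIJ : ∀ (i j : Fin n) (u v : Fin k),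
      μ {ω | I ω = i ∧ J ω = j ∧ U ω = u ∧ V ω = v} =
        μ {ω | U ω = u ∧ V ω = v} * ENNReal.ofReal (Y i u / cY u) *
          ENNReal.ofReal (Z j v / cZ v)) :
    ∀ (i j : Fin n),
      μ {ω | I ω = i ∧ J ω = j} = ENNReal.ofReal ((Y * B * Zᵀ) i j / lam) := by
  have hatom : ∀ i j u v, μ.real {ω | I ω = i ∧ J ω = j ∧ U ω = u ∧ V ω = v} =
      Y i u * B u v * Z j v / lam := by
    intro i j u v
    have h1 := (hcYpos u).ne'
    have h2 := (hcZpos v).ne'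
    have h3 := hlampos.ne'
    rw [measureReal_def, hIJ, hUV, ENNReal.toReal_mul, ENNReal.toReal_mul,
      ENNReal.toReal_ofReal, ENNReal.toReal_ofReal, ENNReal.toReal_ofReal]
    · field_simp
    · exact div_nonneg (hZ j v) (hcZpos v).le
    · exact div_nonneg (hY i u) (hcYpos u).le
    · exact div_nonneg (mul_nonneg (mul_nonneg (hcYpos u).le (hB u v)) (hcZpos v).le) hlampos.le
  have hle : ∀ p : Fin n × Fin n, μ.real {ω | I ω = p.1 ∧ J ω = p.2} ≤
      (Y * B * Zᵀ) p.1 p.2 / lam := by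
    rintro ⟨i, j⟩
    have hcover : {ω | I ω = i ∧ J ω = j} =
        ⋃ q : Fin k × Fin k, {ω | I ω = i ∧ J ω = j ∧ U ω = q.1 ∧ V ω = q.2} := by
      ext ω
      simp
    calc μ.real {ω | I ω = i ∧ J ω = j}
        ≤ ∑ q : Fin k × Fin k, μ.real {ω | I ω = i ∧ J ω = j ∧ U ω = q.1 ∧ V ω = q.2} := by
          rw [hcover]
          exact measureReal_iUnion_fintype_le _
      _ = (Y * B * Zᵀ) i j / lam := by
          simp_rw [hatom]
          rw [← Finset.sum_div, Fintype.sum_prod_type_right]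
          simp [Matrix.mul_apply, Finset.sum_mul]
  have htotal : ∑ p : Fin n × Fin n, (Y * B * Zᵀ) p.1 p.2 / lam = 1 := by
    rw [← Finset.sum_div, sum_entries_eq]
    simp_rw [← hcY, ← hcZ]
    rw [← hlam, div_self hlampos.ne']
  have hone : 1 ≤ ∑ p : Fin n × Fin n, μ.real {ω | I ω = p.1 ∧ J ω = p.2} := by
    have hcover : (Set.univ : Set Ω) = ⋃ p : Fin n × Fin n, {ω | I ω = p.1 ∧ J ω = p.2} := by
      ext ω
      simp
    calc (1 : ℝ) = μ.real Set.univ := by simp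
      _ ≤ _ := by
          rw [hcover]
          exact measureReal_iUnion_fintype_le _
  -- Termwise `≤` with equal totals forces termwise equality.
  have heq := (Finset.sum_eq_sum_iff_of_le fun p _ => hle p).mp
    (le_antisymm (Finset.sum_le_sum fun p _ => hle p) (htotal.trans_le hone))
  intro i j
  rw [← heq (i, j) (Finset.mem_univ _), ofReal_measureReal]
end
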